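/- arXiv:1605.08965 — 2 statements merged into one kernel-verified Lean document; each statement's English description precedes it below -/
import Mathlib

section
/- Let Q = [0,1]² ⊂ ℝ² and let γ₀ : Q → ℝ be continuous, attaining its minimum m₀ < 0 exactly at one point a₀ in the interior of Q; suppose there exist r > 0 and λ₁ ≥ λ₂ > 0 such that the closed disk of radius r about a₀ lies in Q and m₀ + (λ₂/2)|a − a₀|² ≤ γ₀(a) ≤ m₀ + (λ₁/2)|a − a₀|² for all a with |a − a₀| ≤ r. Set τ* = −1/m₀. Then there exist δ ∈ (0, τ*) and constants c > 0, C > 0 such that for every τ with 0 < τ* − τ < δ: c/(τ* − τ) ≤ ∫_Q 1/(1 + γ₀(a)·τ)² da ≤ C/(τ* − τ). -/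
/-!
Write `k = -m₀` and `ε = τ* - τ`. Since `1 + m₀ τ = k ε`, the denominator splits as
`1 + γ₀ τ = k ε + (γ₀ - m₀) τ`, with `τ` comparable to `τ* = 1 / k` once `ε < τ* / 2`.

*Lower bound.* On the disk of radius `r √(k ε)` about `a₀` the upper quadratic bound makes the
denominator at most a constant times `ε`; the disk has area `π r² k ε`, so it alone contributes a
constant times `ε / ε²`.

*Upper bound.* By compactness of `Q` and uniqueness of the minimum, the lower quadratic bound near
`a₀` extends (with a smaller constant) to all of `Q`. The integrand is thus at most a constant
times `(ε + ‖a - a₀‖²)⁻²`, whose integral over the whole plane equals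
`ε⁻¹ ∫ (1 + ‖y‖²)⁻² dy` by the substitution `a = a₀ + √ε y`.
-/

open MeasureTheory

/-- A strict minimum on a compact set which is quadratically nondegenerate near the minimizer is
quadratically nondegenerate on the whole set. -/
lemma exists_global_quadratic_lower_bound {E : Type*} [NormedAddCommGroup E]
    {Q : Set E} (hQ : IsCompact Q) {f : E → ℝ} (hf : ContinuousOn f Q) {a₀ : E} {m r l : ℝ}
    (hr : 0 < r) (hl : 0 < l) (hunique : ∀ a ∈ Q, a ≠ a₀ → m < f a)
    (hquad : ∀ a ∈ Metric.closedBall a₀ r, m + l * ‖a - a₀‖ ^ 2 ≤ f a) :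
    ∃ μ > 0, ∀ a ∈ Q, m + μ * ‖a - a₀‖ ^ 2 ≤ f a := by
  have hK : IsCompact (Q \ Metric.ball a₀ r) := hQ.diff Metric.isOpen_ball
  obtain ⟨D, hD⟩ := hQ.isBounded.subset_closedBall a₀
  have hη : ∃ η > 0, ∀ a ∈ Q \ Metric.ball a₀ r, m + η ≤ f a := by
    rcases (Q \ Metric.ball a₀ r).eq_empty_or_nonempty with h | h
    · exact ⟨1, one_pos, by simp [h]⟩
    · obtain ⟨x, hx, hxmin⟩ := hK.exists_isMinOn h (hf.mono Set.sdiff_subset)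
      have hne : x ≠ a₀ := by
        rintro rfl
        exact hx.2 (Metric.mem_ball_self hr)
      refine ⟨f x - m, sub_pos.2 (hunique x hx.1 hne), fun a ha => ?_⟩
      have := hxmin ha
      simp only [Set.mem_ofPred_eq] at this
      linarith
  obtain ⟨η, hη0, hη⟩ := hη
  have hD1 : 0 < D ^ 2 + 1 := by positivity
  refine ⟨min l (η / (D ^ 2 + 1)), lt_min hl (by positivity), fun a ha => ?_⟩
  by_cases h : a ∈ Metric.ball a₀ r
  · refine le_trans ?_ (hquad a (Metric.ball_subset_closedBall h))
    gcongr
    exact min_le_left _ _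
  · refine le_trans ?_ (hη a ⟨ha, h⟩)
    have h1 : ‖a - a₀‖ ≤ D := by simpa [dist_eq_norm] using hD ha
    have h2 : ‖a - a₀‖ ^ 2 ≤ D ^ 2 + 1 := by nlinarith [norm_nonneg (a - a₀)]
    have : min l (η / (D ^ 2 + 1)) * ‖a - a₀‖ ^ 2 ≤ η / (D ^ 2 + 1) * (D ^ 2 + 1) := by
      gcongr
      exact min_le_right _ _
    rw [div_mul_cancel₀ _ hD1.ne'] at this
    linarith

lemma integrable_one_add_norm_sq_sq :
    Integrable fun y : EuclideanSpace ℝ (Fin 2) => 1 / (1 + ‖y‖ ^ 2) ^ 2 := by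
  have h := integrable_rpow_neg_one_add_norm_sq (E := EuclideanSpace ℝ (Fin 2))
    (μ := volume) (r := 4) (by simp; norm_num)
  refine h.congr (Filter.Eventually.of_forall fun y => ?_)
  have h0 : 0 ≤ 1 + ‖y‖ ^ 2 := by positivity
  have : (-4 / 2 : ℝ) = -(2 : ℕ) := by norm_num
  simp only [this, Real.rpow_neg h0, Real.rpow_natCast, one_div]

lemma add_norm_sub_sq_eq_scaled (a₀ a : EuclideanSpace ℝ (Fin 2)) {ε : ℝ} (hε : 0 < ε) :
    1 / (ε + ‖a - a₀‖ ^ 2) ^ 2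
      = (1 / ε ^ 2) * (1 / (1 + ‖(√ε)⁻¹ • (a - a₀)‖ ^ 2) ^ 2) := by
  have h : ‖(√ε)⁻¹ • (a - a₀)‖ ^ 2 = ε⁻¹ * ‖a - a₀‖ ^ 2 := by
    rw [norm_smul, mul_pow, Real.norm_eq_abs, sq_abs, inv_pow, Real.sq_sqrt hε.le]
  have : ε + ‖a - a₀‖ ^ 2 = ε * (1 + ε⁻¹ * ‖a - a₀‖ ^ 2) := by
    field_simp
  rw [h, this, mul_pow, one_div_mul_one_div]

lemma integrable_add_norm_sub_sq (a₀ : EuclideanSpace ℝ (Fin 2)) {ε : ℝ} (hε : 0 < ε) :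
    Integrable fun a : EuclideanSpace ℝ (Fin 2) => 1 / (ε + ‖a - a₀‖ ^ 2) ^ 2 := by
  simp only [add_norm_sub_sq_eq_scaled a₀ _ hε]
  have h := integrable_one_add_norm_sq_sq.comp_smul (inv_ne_zero (Real.sqrt_pos.2 hε).ne')
  exact (h.comp_sub_right a₀).const_mul _

lemma integral_add_norm_sub_sq (a₀ : EuclideanSpace ℝ (Fin 2)) {ε : ℝ} (hε : 0 < ε) :
    ∫ a : EuclideanSpace ℝ (Fin 2), 1 / (ε + ‖a - a₀‖ ^ 2) ^ 2
      = (∫ y : EuclideanSpace ℝ (Fin 2), 1 / (1 + ‖y‖ ^ 2) ^ 2) / ε := by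
  simp only [add_norm_sub_sq_eq_scaled a₀ _ hε]
  rw [integral_const_mul, integral_sub_right_eq_self
    (fun a => 1 / (1 + ‖(√ε)⁻¹ • a‖ ^ 2) ^ 2) a₀,
    Measure.integral_comp_inv_smul volume
      (fun y : EuclideanSpace ℝ (Fin 2) => 1 / (1 + ‖y‖ ^ 2) ^ 2)]
  simp only [finrank_euclideanSpace, Fintype.card_fin, Real.sq_sqrt hε.le, abs_of_pos hε,
    smul_eq_mul]
  field_simp


/-- estimate (4.6) of Chen–Sarria, following Constantin.
Under the quadratic nondegeneracy hypothesis on `γ₀` at its unique negative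
minimum `m₀` (attained at `a₀` in the interior of `Q = [0,1]²`), the integral
`∫_Q da/(1 + γ₀(a)τ)²` blows up like `(τ* − τ)⁻¹` as `τ ↗ τ* = −1/m₀`.
Integrals over `Q` are with respect to 2-dimensional Lebesgue measure. -/
theorem inverse_blowup_rate_second_integral
    (Q : Set (EuclideanSpace ℝ (Fin 2)))
    (hQ : Q = {a : EuclideanSpace ℝ (Fin 2) | ∀ i, a i ∈ Set.Icc (0:ℝ) 1})
    (γ₀ : EuclideanSpace ℝ (Fin 2) → ℝ) (hcont : ContinuousOn γ₀ Q)
    (m₀ : ℝ) (hm₀neg : m₀ < 0)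
    (a₀ : EuclideanSpace ℝ (Fin 2)) (ha₀ : a₀ ∈ interior Q)
    (hmin : γ₀ a₀ = m₀)
    (hunique : ∀ a ∈ Q, a ≠ a₀ → m₀ < γ₀ a)
    (r lam₁ lam₂ : ℝ) (hr : 0 < r) (hlam : lam₁ ≥ lam₂) (hlam₂ : 0 < lam₂)
    (hball : Metric.closedBall a₀ r ⊆ Q)
    (hquad : ∀ a ∈ Metric.closedBall a₀ r,
      m₀ + (lam₂ / 2) * ‖a - a₀‖ ^ 2 ≤ γ₀ a ∧ γ₀ a ≤ m₀ + (lam₁ / 2) * ‖a - a₀‖ ^ 2) :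
    ∃ δ ∈ Set.Ioo (0:ℝ) (-1 / m₀), ∃ c > (0:ℝ), ∃ C > (0:ℝ),
      ∀ τ : ℝ, 0 < -1 / m₀ - τ → -1 / m₀ - τ < δ →
        c / (-1 / m₀ - τ) ≤ (∫ a in Q, 1 / (1 + γ₀ a * τ) ^ 2) ∧
        (∫ a in Q, 1 / (1 + γ₀ a * τ) ^ 2) ≤ C / (-1 / m₀ - τ) := by
  have hQc : IsCompact Q := by
    have hB : IsCompact (Set.univ.pi fun _ : Fin 2 => Set.Icc (0 : ℝ) 1) :=
      isCompact_univ_pi fun _ => isCompact_Icc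
    have := (PiLp.homeomorph 2 (fun _ : Fin 2 => ℝ)).isCompact_preimage.2 hB
    convert this using 1
    rw [hQ]
    ext a
    exact Set.mem_univ_pi.symm
  obtain ⟨μ, hμ, hglob⟩ := exists_global_quadratic_lower_bound hQc hcont hr
    (half_pos hlam₂) hunique fun a ha => (hquad a ha).1
  have hge : ∀ a ∈ Q, m₀ ≤ γ₀ a := fun a ha =>
    le_trans (le_add_of_nonneg_right (by positivity)) (hglob a ha)
  obtain ⟨k, rfl⟩ : ∃ k, m₀ = -k := ⟨-m₀, by ring⟩
  have hk : 0 < k := by linarith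
  have hlam₁ : 0 < lam₁ := lt_of_lt_of_le hlam₂ hlam
  have hT : -1 / -k = 1 / k := by rw [neg_div_neg_eq]
  rw [hT]
  have hT0 : 0 < 1 / k := by positivity
  set T := 1 / k with hTdef
  have hkT : k * T = 1 := by rw [hTdef]; field_simp
  set A := k + lam₁ / 2 * r ^ 2 with hA
  have hA0 : 0 < A := by positivity
  set κ := min k (μ * (T / 2)) with hκ
  have hκ0 : 0 < κ := lt_min hk (by positivity)
  set I := ∫ y : EuclideanSpace ℝ (Fin 2), 1 / (1 + ‖y‖ ^ 2) ^ 2 with hI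
  have hI0 : 0 ≤ I := integral_nonneg fun y => by positivity
  refine ⟨T / 2, ⟨by positivity, by linarith⟩, Real.pi * r ^ 2 * k / A ^ 2, by positivity,
    (I + 1) / κ ^ 2, by positivity, fun τ hτ hτ' => ?_⟩
  obtain ⟨ε, rfl⟩ : ∃ ε, τ = T - ε := ⟨T - τ, by ring⟩
  rw [sub_sub_cancel] at hτ hτ' ⊢
  have hden : ∀ a, 1 + γ₀ a * (T - ε) = k * ε + (γ₀ a + k) * (T - ε) := fun a => by
    linear_combination (-1 : ℝ) * hkT
  have hpos : ∀ a ∈ Q, 0 < 1 + γ₀ a * (T - ε) := fun a ha => by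
    rw [hden]
    have := mul_nonneg (by linarith [hge a ha] : 0 ≤ γ₀ a + k) (by linarith : 0 ≤ T - ε)
    nlinarith [mul_pos hk hτ]
  have hint : IntegrableOn (fun a => 1 / (1 + γ₀ a * (T - ε)) ^ 2) Q := by
    refine ContinuousOn.integrableOn_compact hQc ?_
    refine continuousOn_const.div ((continuousOn_const.add (hcont.mul continuousOn_const)).pow 2)
      fun a ha => (pow_pos (hpos a ha) 2).ne'
  constructor
  -- The disk of radius `ρ` lies in the region of quadratic control because `k * ε ≤ k * T = 1`.
  · set ρ := r * √(k * ε) with hρ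
    have hkε : k * ε ≤ 1 := by nlinarith
    have hρ0 : 0 ≤ ρ := by positivity
    have hρr : ρ ≤ r := mul_le_of_le_one_right hr.le (Real.sqrt_le_one.2 hkε)
    have hρ2 : ρ ^ 2 = r ^ 2 * (k * ε) := by
      rw [hρ, mul_pow, Real.sq_sqrt (by positivity)]
    have hsub' := Metric.closedBall_subset_closedBall (x := a₀) hρr
    have hsub : Metric.closedBall a₀ ρ ⊆ Q := hsub'.trans hball
    have hvol : volume.real (Metric.closedBall a₀ ρ) = Real.pi * r ^ 2 * k * ε := by
      rw [Measure.real, EuclideanSpace.volume_closedBall_fin_two]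
      simp [ENNReal.toReal_ofReal hρ0, ENNReal.toReal_ofReal Real.pi_pos.le, hρ2]
      ring
    calc Real.pi * r ^ 2 * k / A ^ 2 / ε
        = ∫ a in Metric.closedBall a₀ ρ, 1 / (A * ε) ^ 2 := by
          rw [setIntegral_const, hvol, smul_eq_mul]
          field_simp
      _ ≤ ∫ a in Metric.closedBall a₀ ρ, 1 / (1 + γ₀ a * (T - ε)) ^ 2 := by
          refine setIntegral_mono_on (integrableOn_const measure_closedBall_lt_top.ne)
            (hint.mono_set hsub) Metric.isClosed_closedBall.measurableSet fun a ha => ?_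
          refine one_div_le_one_div_of_le (pow_pos (hpos a (hsub ha)) 2)
            (pow_le_pow_left₀ (hpos a (hsub ha)).le ?_ 2)
          have hn : ‖a - a₀‖ ≤ ρ := by simpa [dist_eq_norm] using ha
          have hn2 : ‖a - a₀‖ ^ 2 ≤ r ^ 2 * (k * ε) := by
            rw [← hρ2]
            gcongr
          have hg : γ₀ a + k ≤ lam₁ / 2 * (r ^ 2 * (k * ε)) := by
            have := mul_le_mul_of_nonneg_left hn2 (half_pos hlam₁).le
            linarith [(hquad a (hsub' ha)).2]
          rw [hden]
          calc k * ε + (γ₀ a + k) * (T - ε)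
              ≤ k * ε + lam₁ / 2 * (r ^ 2 * (k * ε)) * T := by
                gcongr
                · linarith
                · linarith
            _ = A * ε := by
                rw [hA]
                linear_combination (lam₁ / 2 * r ^ 2 * ε) * hkT
      _ ≤ ∫ a in Q, 1 / (1 + γ₀ a * (T - ε)) ^ 2 :=
          setIntegral_mono_set hint (Filter.Eventually.of_forall fun a => by
            simp only [Pi.zero_apply]; positivity) hsub.eventuallyLE
  · have hG := (integrable_add_norm_sub_sq a₀ hτ).const_mul (1 / κ ^ 2)
    calc ∫ a in Q, 1 / (1 + γ₀ a * (T - ε)) ^ 2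
        ≤ ∫ a in Q, 1 / κ ^ 2 * (1 / (ε + ‖a - a₀‖ ^ 2) ^ 2) := by
          refine setIntegral_mono_on hint hG.integrableOn hQc.measurableSet fun a ha => ?_
          rw [one_div_mul_one_div, ← mul_pow]
          refine one_div_le_one_div_of_le (by positivity) (pow_le_pow_left₀ (by positivity) ?_ 2)
          rw [hden, mul_add]
          have h1 : κ * ‖a - a₀‖ ^ 2 ≤ μ * (T / 2) * ‖a - a₀‖ ^ 2 := by
            gcongr
            exact min_le_right _ _
          have h2 : μ * ‖a - a₀‖ ^ 2 * (T / 2) ≤ (γ₀ a + k) * (T - ε) := by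
            have := hglob a ha
            have h0 : 0 ≤ μ * ‖a - a₀‖ ^ 2 := by positivity
            apply mul_le_mul <;> linarith
          have h3 : κ * ε ≤ k * ε := by
            gcongr
            exact min_le_left _ _
          linarith
      _ ≤ ∫ a, 1 / κ ^ 2 * (1 / (ε + ‖a - a₀‖ ^ 2) ^ 2) :=
          setIntegral_le_integral hG (Filter.Eventually.of_forall fun a => by
            simp only [Pi.zero_apply]; positivity)
      _ = I / κ ^ 2 / ε := by
          rw [integral_const_mul, integral_add_norm_sub_sq a₀ hτ]
          ring
      _ ≤ (I + 1) / κ ^ 2 / ε := by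
          gcongr
          linarith
end

section
/- Let Q = [0,1]² ⊂ ℝ² and let γ₀ : Q → ℝ be continuous, attaining its minimum m₀ < 0 exactly at one point a₀ in the interior of Q; suppose there exist r > 0 and λ₁ ≥ λ₂ > 0 such that the closed disk of radius r about a₀ lies in Q and m₀ + (λ₂/2)|a − a₀|² ≤ γ₀(a) ≤ m₀ + (λ₁/2)|a − a₀|² for all a with |a − a₀| ≤ r. Set τ* = −1/m₀. Then the function μ ↦ (∫_Q 1/(1 + γ₀(a)·μ) da)² is integrable on (0, τ*); that is, T^E := ∫₀^{τ*} (∫_Q 1/(1 + γ₀(a)·μ) da)² dμ is finite. -/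
/-!
The denominator `1 + γ₀(a) μ` is squeezed from below by two quantities. Put `ε = 1 + m₀ μ ∈ (0, 1)`.
By compactness of `Q` the quadratic lower bound near `a₀` extends to a global one,
`γ₀(a) ≥ m₀ + k |m₀| |a - a₀|²` on `Q`, with `k` small enough that `t = k |a - a₀|² ≤ 1`
(`exists_quadratic_lower_bound`). Hence `1 + γ₀(a) μ ≥ ε + (1 - ε) t ≥ max ε t ≥ ε^(1/4) t^(3/4)`,
and the inner integral is at most `C ε^(-1/4)`, because `|a - a₀|^(-3/2)` is locally integrable in
the plane (`integrableOn_norm_rpow_ball`). Its square is at most `C² (1 + m₀ μ)^(-1/2)`, which is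
integrable up to `-1/m₀` (`integrableOn_rpow_affine`). This power bound is weaker than the true
logarithmic growth, but it suffices.
-/

open MeasureTheory Set

/-- Local integrability of `‖x‖^(-3/2)` in the plane, from polar coordinates:
the radial density is `y · y^(-3/2) = y^(-1/2)`. -/
lemma integrableOn_norm_rpow_ball (a₀ : EuclideanSpace ℝ (Fin 2)) :
    IntegrableOn (fun a : EuclideanSpace ℝ (Fin 2) => ‖a - a₀‖ ^ (-(3 / 2) : ℝ))
      (Metric.closedBall a₀ 2) := by
  have h1 : Integrable (fun x : EuclideanSpace ℝ (Fin 2) =>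
      (Iic (2 : ℝ)).indicator (fun y : ℝ => y ^ (-(3 / 2) : ℝ)) ‖x‖) volume := by
    rw [integrable_fun_norm_addHaar (μ := (volume : Measure (EuclideanSpace ℝ (Fin 2))))
      (f := (Iic (2 : ℝ)).indicator (fun y : ℝ => y ^ (-(3 / 2) : ℝ)))]
    have h2 : IntegrableOn (fun y : ℝ => y ^ (-(1 / 2) : ℝ)) (Ioc 0 2) := by
      rw [← intervalIntegrable_iff_integrableOn_Ioc_of_le (by norm_num)]
      exact intervalIntegral.intervalIntegrable_rpow' (by norm_num)
    have h3 : IntegrableOn ((Iic (2 : ℝ)).indicator (fun y : ℝ => y ^ (-(1 / 2) : ℝ)))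
        (Ioi 0) := by
      rw [IntegrableOn, integrable_indicator_iff measurableSet_Iic, IntegrableOn,
        Measure.restrict_restrict measurableSet_Iic, inter_comm, Ioi_inter_Iic]
      exact h2
    refine h3.congr_fun ?_ measurableSet_Ioi
    intro y hy
    have hy' : (0 : ℝ) < y := hy
    by_cases hy2 : y ∈ Iic (2 : ℝ)
    · simp only [indicator_of_mem hy2, finrank_euclideanSpace, Fintype.card_fin, smul_eq_mul,
        Nat.add_one_sub_one, pow_one]
      conv_rhs => rw [← Real.rpow_one_add' hy'.le (by norm_num)]
      norm_num
    · simp [indicator_of_notMem hy2]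
  have h4 := (h1.comp_sub_right a₀).integrableOn (s := Metric.closedBall a₀ 2)
  refine h4.congr_fun ?_ measurableSet_closedBall
  intro a ha
  have ha' : ‖a - a₀‖ ∈ Iic (2 : ℝ) := by
    simpa [dist_eq_norm] using ha
  simp only [indicator_of_mem ha']

lemma integrableOn_rpow_affine (m₀ : ℝ) (hm : m₀ < 0) :
    IntegrableOn (fun μ : ℝ => (1 + m₀ * μ) ^ (-(1 / 2) : ℝ)) (Ioo 0 (-1 / m₀)) := by
  have h0 : IntervalIntegrable (fun y : ℝ => y ^ (-(1 / 2) : ℝ)) volume 1 0 :=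
    intervalIntegral.intervalIntegrable_rpow' (by norm_num)
  have h1 := (h0.comp_add_left 1).comp_mul_left (c := m₀)
  have h2 : IntervalIntegrable (fun μ : ℝ => (1 + m₀ * μ) ^ (-(1 / 2) : ℝ)) volume 0 (-1 / m₀) := by
    simpa using h1
  rwa [intervalIntegrable_iff_integrableOn_Ioo_of_le
    (div_nonneg_of_nonpos (by norm_num) hm.le)] at h2

/-- Interpolation between two lower bounds of the denominator `D`. -/
lemma one_div_le_rpow_mul_rpow {D ε t : ℝ} (hε : 0 < ε) (ht : 0 < t) (h1 : ε ≤ D) (h2 : t ≤ D) :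
    1 / D ≤ ε ^ (-(1 / 4) : ℝ) * t ^ (-(3 / 4) : ℝ) := by
  have hD : 0 < D := hε.trans_le h1
  have e : 1 / D = D ^ (-(1 / 4) : ℝ) * D ^ (-(3 / 4) : ℝ) := by
    rw [← Real.rpow_add hD, one_div, ← Real.rpow_neg_one]
    norm_num
  rw [e]
  exact mul_le_mul (Real.rpow_le_rpow_of_nonpos hε h1 (by norm_num))
    (Real.rpow_le_rpow_of_nonpos ht h2 (by norm_num)) (by positivity) (by positivity)

/-- A quadratic lower bound near a strict minimum on a compact set extends to the whole set. -/
lemma exists_quadratic_lower_bound {Q : Set (EuclideanSpace ℝ (Fin 2))} (hQ : IsCompact Q)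
    {γ₀ : EuclideanSpace ℝ (Fin 2) → ℝ} (hcont : ContinuousOn γ₀ Q) {m₀ : ℝ}
    {a₀ : EuclideanSpace ℝ (Fin 2)} (hunique : ∀ a ∈ Q, a ≠ a₀ → m₀ < γ₀ a)
    {r c : ℝ} (hr : 0 < r) (hc : 0 < c)
    (hquad : ∀ a ∈ Metric.closedBall a₀ r, m₀ + c * ‖a - a₀‖ ^ 2 ≤ γ₀ a) :
    ∃ c' > 0, ∀ a ∈ Q, m₀ + c' * ‖a - a₀‖ ^ 2 ≤ γ₀ a := by
  have hne : ∀ a ∈ Q \ Metric.ball a₀ r, a ≠ a₀ := by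
    rintro a ⟨-, ha⟩ rfl
    exact ha (Metric.mem_ball_self hr)
  have hpos : ∀ a ∈ Q \ Metric.ball a₀ r, 0 < ‖a - a₀‖ ^ 2 := fun a ha =>
    pow_pos (norm_pos_iff.2 (sub_ne_zero.2 (hne a ha))) 2
  have hg : ContinuousOn (fun a => (γ₀ a - m₀) / ‖a - a₀‖ ^ 2) (Q \ Metric.ball a₀ r) :=
    ((hcont.mono sdiff_subset).sub continuousOn_const).div (by fun_prop)
      fun a ha => (hpos a ha).ne'
  obtain ⟨d, hd, hdle⟩ : ∃ d > 0, ∀ a ∈ Q \ Metric.ball a₀ r,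
      d ≤ (γ₀ a - m₀) / ‖a - a₀‖ ^ 2 := by
    rcases (Q \ Metric.ball a₀ r).eq_empty_or_nonempty with h | h
    · exact ⟨1, one_pos, by simp [h]⟩
    · obtain ⟨b, hb, hbmin⟩ := (hQ.diff Metric.isOpen_ball).exists_isMinOn h hg
      exact ⟨_, div_pos (sub_pos.2 (hunique b hb.1 (hne b hb))) (hpos b hb), fun a ha => hbmin ha⟩
  refine ⟨min c d, lt_min hc hd, fun a ha => ?_⟩
  by_cases hab : a ∈ Metric.ball a₀ r
  · have := hquad a (Metric.ball_subset_closedBall hab)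
    nlinarith [min_le_left c d, sq_nonneg ‖a - a₀‖]
  · have h1 := (le_div_iff₀ (hpos a ⟨ha, hab⟩)).1 (hdle a ⟨ha, hab⟩)
    nlinarith [min_le_right c d, sq_nonneg ‖a - a₀‖]

/-- Under the quadratic nondegeneracy hypothesis on `γ₀` at
its unique negative minimum `m₀`, the function
`μ ↦ (∫_Q da/(1 + γ₀(a)μ))²` is integrable on `(0, τ*)`, `τ* = −1/m₀`; i.e.
the undamped Euler blowup time `T^E = ∫₀^{τ*} (∫_Q da/(1+γ₀(a)μ))² dμ` is
finite.  Integrals over `Q` are with respect to 2-dimensional Lebesgue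
measure. -/
theorem undamped_euler_blowup_time_finite
    (Q : Set (EuclideanSpace ℝ (Fin 2)))
    (hQ : Q = {a : EuclideanSpace ℝ (Fin 2) | ∀ i, a i ∈ Set.Icc (0:ℝ) 1})
    (γ₀ : EuclideanSpace ℝ (Fin 2) → ℝ) (hcont : ContinuousOn γ₀ Q)
    (m₀ : ℝ) (hm₀neg : m₀ < 0)
    (a₀ : EuclideanSpace ℝ (Fin 2)) (ha₀ : a₀ ∈ interior Q)
    (hmin : γ₀ a₀ = m₀)
    (hunique : ∀ a ∈ Q, a ≠ a₀ → m₀ < γ₀ a)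
    (r lam₁ lam₂ : ℝ) (hr : 0 < r) (hlam : lam₁ ≥ lam₂) (hlam₂ : 0 < lam₂)
    (hball : Metric.closedBall a₀ r ⊆ Q)
    (hquad : ∀ a ∈ Metric.closedBall a₀ r,
      m₀ + (lam₂ / 2) * ‖a - a₀‖ ^ 2 ≤ γ₀ a ∧ γ₀ a ≤ m₀ + (lam₁ / 2) * ‖a - a₀‖ ^ 2) :
    MeasureTheory.IntegrableOn
      (fun μ : ℝ => (∫ a in Q, 1 / (1 + γ₀ a * μ)) ^ 2)
      (Set.Ioo 0 (-1 / m₀)) := by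
  have hnorm : ∀ a ∈ Q, ‖a - a₀‖ ^ 2 ≤ 2 := by
    intro a ha
    have hb : a₀ ∈ Q := interior_subset ha₀
    rw [hQ] at ha hb
    rw [EuclideanSpace.norm_sq_eq, Fin.sum_univ_two]
    have key : ∀ i, ‖(a - a₀) i‖ ^ 2 ≤ 1 := by
      intro i
      have h1 := ha i
      have h2 := hb i
      rw [PiLp.sub_apply, Real.norm_eq_abs, sq_abs]
      nlinarith [h1.1, h1.2, h2.1, h2.2]
    linarith [key 0, key 1]
  have hsub : Q ⊆ Metric.closedBall a₀ 2 := by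
    intro a ha
    rw [Metric.mem_closedBall, dist_eq_norm]
    nlinarith [hnorm a ha, norm_nonneg (a - a₀)]
  have hclosed : IsClosed Q := by
    rw [hQ, ofPred_forall]
    exact isClosed_iInter fun i => isClosed_Icc.preimage (by fun_prop)
  have hcomp : IsCompact Q := (isCompact_closedBall a₀ 2).of_isClosed_subset hclosed hsub
  obtain ⟨c, hc, hlow⟩ := exists_quadratic_lower_bound hcomp hcont hunique hr (half_pos hlam₂)
    fun a ha => (hquad a ha).1
  -- The cap `1/2` ensures `k * ‖a - a₀‖ ^ 2 ≤ 1` on `Q`, whose squared diameter is `2`.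
  obtain ⟨k, hk, hk1, hk2⟩ : ∃ k > 0, k ≤ 1 / 2 ∧ k * (-m₀) ≤ c :=
    ⟨min (1 / 2) (c / -m₀), lt_min (by norm_num) (div_pos hc (neg_pos.2 hm₀neg)),
      min_le_left _ _, (le_div_iff₀ (neg_pos.2 hm₀neg)).1 (min_le_right _ _)⟩
  have hbd : ∀ μ ∈ Ioo 0 (-1 / m₀), ∀ a ∈ Q, a ≠ a₀ →
      ‖1 / (1 + γ₀ a * μ)‖ ≤
        (1 + m₀ * μ) ^ (-(1 / 4) : ℝ) * (k ^ (-(3 / 4) : ℝ) * ‖a - a₀‖ ^ (-(3 / 2) : ℝ)) := by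
    intro μ hμ a ha hne
    have hε : 0 < 1 + m₀ * μ := by
      have := (lt_div_iff_of_neg hm₀neg).1 hμ.2
      linarith
    have hx : 0 < ‖a - a₀‖ := norm_pos_iff.2 (sub_ne_zero.2 hne)
    have hx2 : 0 < ‖a - a₀‖ ^ 2 := by positivity
    have hD1 : 1 + m₀ * μ ≤ 1 + γ₀ a * μ := by
      nlinarith [hunique a ha hne, hμ.1]
    have hγ : m₀ + k * (-m₀) * ‖a - a₀‖ ^ 2 ≤ γ₀ a := by
      nlinarith [hlow a ha]
    have ht1 : k * ‖a - a₀‖ ^ 2 ≤ 1 := by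
      nlinarith [hnorm a ha]
    have hD2 : k * ‖a - a₀‖ ^ 2 ≤ 1 + γ₀ a * μ := by
      -- A convex combination of `1` and `t ≤ 1`, with weight `ε = 1 + m₀ μ`, is at least `t`.
      have h1 := mul_le_mul_of_nonneg_right hγ hμ.1.le
      have h2 := mul_nonneg hε.le (sub_nonneg.2 ht1)
      linarith
    rw [Real.norm_of_nonneg (one_div_nonneg.2 (hε.le.trans hD1))]
    refine (one_div_le_rpow_mul_rpow hε (by positivity) hD1 hD2).trans_eq ?_
    rw [Real.mul_rpow hk.le hx2.le, ← Real.rpow_natCast, ← Real.rpow_mul hx.le]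
    norm_num
  have hint : IntegrableOn (fun a : EuclideanSpace ℝ (Fin 2) =>
      k ^ (-(3 / 4) : ℝ) * ‖a - a₀‖ ^ (-(3 / 2) : ℝ)) Q :=
    ((integrableOn_norm_rpow_ball a₀).mono_set hsub).const_mul _
  set K := ∫ a in Q, k ^ (-(3 / 4) : ℝ) * ‖a - a₀‖ ^ (-(3 / 2) : ℝ) with hK
  have hI : ∀ μ ∈ Ioo 0 (-1 / m₀),
      ‖∫ a in Q, 1 / (1 + γ₀ a * μ)‖ ≤ (1 + m₀ * μ) ^ (-(1 / 4) : ℝ) * K := by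
    intro μ hμ
    rw [hK, ← integral_const_mul]
    refine norm_integral_le_of_norm_le (hint.const_mul _) ?_
    have hae : ∀ᵐ a ∂(volume.restrict Q), a ≠ a₀ := by
      rw [ae_iff]
      simp
    filter_upwards [ae_restrict_mem hclosed.measurableSet, hae] with a ha hne
    exact hbd μ hμ a ha hne
  have hmeas : AEStronglyMeasurable (fun μ : ℝ => (∫ a in Q, 1 / (1 + γ₀ a * μ)) ^ 2)
      (volume.restrict (Ioo 0 (-1 / m₀))) := by
    have hγm : AEStronglyMeasurable γ₀ (volume.restrict Q) :=
      hcont.aestronglyMeasurable hclosed.measurableSet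
    have hj : AEStronglyMeasurable
        (fun p : ℝ × EuclideanSpace ℝ (Fin 2) => 1 / (1 + γ₀ p.2 * p.1))
        ((volume.restrict (Ioo 0 (-1 / m₀))).prod (volume.restrict Q)) := by
      have h1 : AEMeasurable (fun p : ℝ × EuclideanSpace ℝ (Fin 2) => γ₀ p.2)
          ((volume.restrict (Ioo 0 (-1 / m₀))).prod (volume.restrict Q)) :=
        hγm.comp_snd.aemeasurable
      exact (((h1.mul measurable_fst.aemeasurable).const_add 1).const_div 1).aestronglyMeasurable
    exact hj.integral_prod_right'.pow 2
  refine Integrable.mono' ((integrableOn_rpow_affine m₀ hm₀neg).mul_const (K ^ 2)) hmeas ?_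
  filter_upwards [ae_restrict_mem measurableSet_Ioo] with μ hμ
  have hε : 0 < 1 + m₀ * μ := by
    have := (lt_div_iff_of_neg hm₀neg).1 hμ.2
    linarith
  rw [norm_pow]
  refine (pow_le_pow_left₀ (norm_nonneg _) (hI μ hμ) 2).trans_eq ?_
  rw [mul_pow, ← Real.rpow_natCast, ← Real.rpow_mul hε.le]
  norm_num
end
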